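/- Let η: η_1, …, η_{s+1} and η′: η′_1, …, η′_s be integer sequences (s ≥ 1), μ = (μ_1, …, μ_{s+1}) an integer tuple, and π^1, …, π^s a sequence of partitions. Assume: (1) η_1 ≥ … ≥ η_{s+1}; (2) η′ nearly interlaces η, and π^1, …, π^s is an approximate partition overlay on η, η′; (3) η majorizes μ; (4) (η_1 + … + η_{s+1}) − (η′_1 + … + η′_s) = μ_{s+1}. Let k be an integer and let η̂, η̂′ be the shifts by k of η, η′. If k ≥ □^prop(η, η′) + |π^1| + |π^s|, then: (a) η̂ and η̂′ interlace (in particular η̂′_1 ≥ … ≥ η̂′_s); (b) π^j fits into the rectangle (η̂_j − η̂′_j, η̂′_j − η̂_{j+1}) for all 1 ≤ j ≤ s; and (c) η̂′ majorizes (μ_1 + k, …, μ_s + k). -/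

import Mathlib

/-!
Write `d i = η i - η' i` and `e j = η' j - η (j + 1)`. For `s ≥ 2` near interlacing makes `d i` nonnegative for
`i < s` and `e j` nonnegative for `2 ≤ j`, so the proper trapezoidal area is a sum of nonnegative
terms `d i * e j` and dominates every rectangular block `X m * Y m`, where
`X m = d 1 + ⋯ + d m` and `Y m = e (m + 1) + ⋯ + e s` (`block_le_propTrap`).

Majorization of `μ` by `η` gives `η (s + 1) ≤ μ (s + 1) ≤ η 1`, which says `0 ≤ ∑ d` and `0 ≤ ∑ e`.
The blocks `m = s - 1` and `m = 1` then show that the area is at least `-d s` and `-e 1`. Since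
`0 ≤ d s` and `0 ≤ e 1` are the only interlacing inequalities that may fail before the shift, adding
`k` to these two sides restores interlacing. The summands `|π^1|`, `|π^s|`
of the bound on `k` pay for the sides of the two outer rectangles.

For the majorization, let `B` have `m` elements with `1 ≤ m < s`. Comparing `B` and `B ∪ {s + 1}`
with the leading partial sums of `η` bounds the excess `∑_B μ - (η' 1 + ⋯ + η' m)` by `X m` and by
`Y m` respectively, and `min (X m) (Y m) ≤ X m * Y m ≤ k` for nonnegative integers.
-/

open Finset

/-- A partition: a non-increasing, eventually-zero sequence of naturals indexed from `1`
(the value at `0` is irrelevant; the convention `π₀ = ∞` is handled separately). -/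
def IsPartition (p : ℕ → ℕ) : Prop :=
  (∀ i, 1 ≤ i → p (i + 1) ≤ p i) ∧ ∃ N, ∀ i, N ≤ i → p i = 0

/-- The number of boxes `|π|` of a partition: the sum of its parts. -/
noncomputable def psize (p : ℕ → ℕ) : ℕ := ∑ᶠ i ∈ Set.Ici (1 : ℕ), p i

/-- The largest non-negative integer `a` such that `π_a ≥ a - c`
(with the convention `π₀ = ∞`, so `a = 0` is always admissible). -/
noncomputable def aOf (p : ℕ → ℕ) (c : ℤ) : ℕ :=
  sSup {a : ℕ | a = 0 ∨ (a : ℤ) - c ≤ (p a : ℤ)}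

/-- The partition `p` fits into the rectangle `(a, b)`: at most `a` parts, each ≤ `b`. -/
def FitsRect (p : ℕ → ℕ) (a b : ℤ) : Prop :=
  (∀ k : ℕ, a < (k : ℤ) → p k = 0) ∧ ∀ k : ℕ, 1 ≤ k → (p k : ℤ) ≤ b

/-- `x` (indexed by `1, …, n`) majorizes `y` (integer version): every `k`-element partial
sum of `y` is dominated by some `k`-element partial sum of `x` (equivalently, partial sums
of the non-increasing rearrangements are ordered), and the total sums agree. -/
def MajZ (n : ℕ) (x y : ℕ → ℤ) : Prop :=
  (∀ B : Finset ℕ, B ⊆ Finset.Icc 1 n →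
    ∃ A : Finset ℕ, A ⊆ Finset.Icc 1 n ∧ A.card = B.card ∧
      ∑ i ∈ B, y i ≤ ∑ i ∈ A, x i) ∧
  ∑ i ∈ Finset.Icc 1 n, x i = ∑ i ∈ Finset.Icc 1 n, y i

/-- `η'` (length `s`, with `η'_2 ≥ … ≥ η'_s`) nearly interlaces `η` (length `s + 1`):
no condition if `s = 1`; if `s ≥ 2` then `η_1 ≥ η'_1`, `η'_s ≥ η_{s+1}`, and
`(η'_2, …, η'_{s-1})` interlaces `(η_2, …, η_s)`. -/
def NearlyInterlaces (s : ℕ) (η η' : ℕ → ℤ) : Prop :=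
  (∀ i, 2 ≤ i → i + 1 ≤ s → η' (i + 1) ≤ η' i) ∧
  (2 ≤ s → η' 1 ≤ η 1 ∧ η (s + 1) ≤ η' s ∧
    ∀ i, 2 ≤ i → i + 1 ≤ s → η' i ≤ η i ∧ η (i + 1) ≤ η' i)

/-- The partitions `P 1, …, P s` approximately overlay the nearly interlacing pair
`η`, `η'`: no condition if `s = 1`; if `s ≥ 2` then `P 1` has at most `η 1 - η' 1` parts,
`P s` has largest part at most `η' s - η (s+1)`, and `P j` fits into the rectangle
`(η j - η' j, η' j - η (j+1))` for `2 ≤ j ≤ s - 1`. -/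
def ApproxOverlay (s : ℕ) (η η' : ℕ → ℤ) (P : ℕ → ℕ → ℕ) : Prop :=
  2 ≤ s →
    (∀ k : ℕ, η 1 - η' 1 < (k : ℤ) → P 1 k = 0) ∧
    (∀ k : ℕ, 1 ≤ k → (P s k : ℤ) ≤ η' s - η (s + 1)) ∧
    ∀ j, 2 ≤ j → j + 1 ≤ s → FitsRect (P j) (η j - η' j) (η' j - η (j + 1))

/-- The proper trapezoidal area `□^prop(η, η') = Σ_{1 ≤ i < j ≤ s} (η_i - η'_i)(η'_j - η_{j+1})`. -/
def propTrap (s : ℕ) (η η' : ℕ → ℤ) : ℤ :=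
  ∑ i ∈ Finset.Icc 1 s, ∑ j ∈ Finset.Icc (i + 1) s, (η i - η' i) * (η' j - η (j + 1))

/-- The sequence `a_j` of §3.1.2 of the paper, for the data `(μ, π)` and `η`:
`a_0 = 0` and `a_j = aOf π (μ - η_{j+1})` (the relevant `c_j` being `μ - η_{j+1}`). -/
noncomputable def Aseq (p : ℕ → ℕ) (η : ℕ → ℤ) (μ : ℤ) (j : ℕ) : ℕ :=
  if j = 0 then 0 else aOf p (μ - η (j + 1))

/-- The sequence `b_j = a_j - c_j`. -/
noncomputable def Bseq (p : ℕ → ℕ) (η : ℕ → ℤ) (μ : ℤ) (j : ℕ) : ℤ :=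
  (Aseq p η μ j : ℤ) - (μ - η (j + 1))

/-- The sequence `η'` produced by the map `ξ_η` applied to `(μ, π)`. -/
noncomputable def xiRow (s : ℕ) (η : ℕ → ℤ) (μ : ℤ) (p : ℕ → ℕ) (j : ℕ) : ℤ :=
  if s = 1 then (if j = 1 then η 1 + η 2 - μ else 0)
  else if j = s then η (s + 1) + Bseq p η μ (s - 1)
  else η j - ((Aseq p η μ j : ℤ) - (Aseq p η μ (j - 1) : ℤ))

/-- The partitions `π^1, …, π^s` produced by the map `ξ_η` applied to `(μ, π)`:
`xiParts s η μ p j` is the partition `π^j`, whose `k`-th part is `π_{a_{j-1}+k} - b_j`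
for `1 ≤ k ≤ a_j - a_{j-1}` (`1 ≤ j ≤ s - 1`), while `π^s` is `π_{a_{s-1}+1}, π_{a_{s-1}+2}, …`. -/
noncomputable def xiParts (s : ℕ) (η : ℕ → ℤ) (μ : ℤ) (p : ℕ → ℕ) (j k : ℕ) : ℕ :=
  if s = 1 then (if j = 1 then p k else 0)
  else if j = s then p (Aseq p η μ (s - 1) + k)
  else if 1 ≤ k ∧ k ≤ Aseq p η μ j - Aseq p η μ (j - 1) then
    p (Aseq p η μ (j - 1) + k) - (Bseq p η μ j).toNat
  else 0

/-- The shift by `k` of a sequence of length `s + 1`: the first entry increases by `2k`,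
entries `2, …, s` increase by `k`, the last entry is unchanged; for a sequence of
length `1` (i.e. `s = 0`) the single entry increases by `k`. -/
def shiftSeq (s : ℕ) (k : ℤ) (η : ℕ → ℤ) (j : ℕ) : ℤ :=
  if s = 0 then (if j = 1 then η 1 + k else η j)
  else if j = 1 then η 1 + 2 * k
  else if j ≤ s then η j + k
  else η j

/-- A sum of `m` entries of a non-increasing sequence is at most the sum of its first `m` entries. -/
lemma sum_le_sum_first {n : ℕ} {x : ℕ → ℤ} (hx : ∀ i, 1 ≤ i → i < n → x (i + 1) ≤ x i)
    {A : Finset ℕ} (hA : A ⊆ Finset.Icc 1 n) :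
    ∑ i ∈ A, x i ≤ ∑ i ∈ Finset.Icc 1 A.card, x i := by
  have hanti : ∀ a, 1 ≤ a → ∀ b, a ≤ b → b ≤ n → x b ≤ x a := by
    intro a ha b hab
    induction b, hab using Nat.le_induction with
    | base => intro _; exact le_rfl
    | succ b hab ih =>
      intro hb
      exact (hx b (by omega) (by omega)).trans (ih (by omega))
  have hcard : A.card ≤ n := by simpa using Finset.card_le_card hA
  -- After subtracting the threshold `x A.card`, entries beyond index `A.card` are nonpositive
  -- and entries up to it are nonnegative.
  set t := x A.card with ht
  have h1 : ∑ i ∈ A, (x i - t) ≤ ∑ i ∈ A ∩ Finset.Icc 1 A.card, (x i - t) := by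
    rw [← Finset.sum_inter_add_sum_sdiff A (Finset.Icc 1 A.card)]
    have : ∑ i ∈ A \ Finset.Icc 1 A.card, (x i - t) ≤ 0 := by
      apply Finset.sum_nonpos
      intro i hi
      rw [Finset.mem_sdiff] at hi
      have hpos : 0 < A.card := Finset.card_pos.mpr ⟨i, hi.1⟩
      have h3 := Finset.mem_Icc.mp (hA hi.1)
      have h4 : A.card ≤ i := by
        by_contra hlt
        exact hi.2 (Finset.mem_Icc.mpr ⟨h3.1, by omega⟩)
      linarith [hanti A.card hpos i h4 h3.2]
    linarith
  have h2 : ∑ i ∈ A ∩ Finset.Icc 1 A.card, (x i - t) ≤ ∑ i ∈ Finset.Icc 1 A.card, (x i - t) := by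
    apply Finset.sum_le_sum_of_subset_of_nonneg Finset.inter_subset_right
    intro i hi _
    rw [Finset.mem_Icc] at hi
    linarith [hanti i hi.1 A.card hi.2 hcard]
  simp only [Finset.sum_sub_distrib, Finset.sum_const, Nat.card_Icc, Nat.add_sub_cancel] at h1 h2
  linarith

lemma sum_Icc_split (f : ℕ → ℤ) {m s : ℕ} (hms : m ≤ s) :
    ∑ i ∈ Finset.Icc 1 s, f i = ∑ i ∈ Finset.Icc 1 m, f i + ∑ i ∈ Finset.Icc (m + 1) s, f i := by
  induction s, hms using Nat.le_induction with
  | base => simp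
  | succ s hms ih =>
    rw [Finset.sum_Icc_succ_top (by omega), Finset.sum_Icc_succ_top (by omega), ih]
    ring

/-- Telescoping: the `d j` and `e j` with `m < j ≤ s` add up to `η (m + 1) - η (s + 1)`. -/
lemma sum_d_add_sum_e (η η' : ℕ → ℤ) {m s : ℕ} (hms : m ≤ s) :
    ∑ j ∈ Finset.Icc (m + 1) s, (η j - η' j) + ∑ j ∈ Finset.Icc (m + 1) s, (η' j - η (j + 1))
      = η (m + 1) - η (s + 1) := by
  induction s, hms using Nat.le_induction with
  | base => simp
  | succ s hms ih =>
    rw [Finset.sum_Icc_succ_top (by omega), Finset.sum_Icc_succ_top (by omega)]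
    linarith

lemma block_le_propTrap {s m : ℕ} {η η' : ℕ → ℤ} (hms : m < s)
    (hd : ∀ i, 1 ≤ i → i < s → 0 ≤ η i - η' i)
    (he : ∀ j, 2 ≤ j → j ≤ s → 0 ≤ η' j - η (j + 1)) :
    (∑ i ∈ Finset.Icc 1 m, (η i - η' i)) * ∑ j ∈ Finset.Icc (m + 1) s, (η' j - η (j + 1))
      ≤ propTrap s η η' := by
  have hterm : ∀ i j, 1 ≤ i → i < j → j ≤ s → 0 ≤ (η i - η' i) * (η' j - η (j + 1)) :=
    fun i j hi hij hj => mul_nonneg (hd i hi (by omega)) (he j (by omega) hj)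
  unfold propTrap
  rw [Finset.sum_mul]
  calc _ ≤ ∑ i ∈ Finset.Icc 1 m, ∑ j ∈ Finset.Icc (i + 1) s, (η i - η' i) * (η' j - η (j + 1)) := by
        apply Finset.sum_le_sum
        intro i hi
        rw [Finset.mem_Icc] at hi
        rw [Finset.mul_sum]
        apply Finset.sum_le_sum_of_subset_of_nonneg
        · exact Finset.Icc_subset_Icc_left (by omega)
        · intro j hj _
          rw [Finset.mem_Icc] at hj
          exact hterm i j hi.1 (by omega) hj.2
    _ ≤ _ := by
        apply Finset.sum_le_sum_of_subset_of_nonneg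
        · exact Finset.Icc_subset_Icc_right hms.le
        · intro i hi _
          rw [Finset.mem_Icc] at hi
          apply Finset.sum_nonneg
          intro j hj
          rw [Finset.mem_Icc] at hj
          exact hterm i j hi.1 (by omega) hj.2

lemma sum_Icc_le_psize {p : ℕ → ℕ} (hp : IsPartition p) (m : ℕ) :
    ∑ i ∈ Finset.Icc 1 m, p i ≤ psize p := by
  obtain ⟨N, hN⟩ := hp.2
  have : psize p = ∑ i ∈ Finset.Icc 1 (max N m), p i := by
    unfold psize
    apply finsum_mem_eq_sum_of_inter_support_eq
    ext i
    simp only [Set.mem_inter_iff, Set.mem_Ici, Function.mem_support, Finset.coe_Icc, Set.mem_Icc]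
    constructor
    · rintro ⟨h1, h2⟩
      refine ⟨⟨h1, ?_⟩, h2⟩
      by_contra hlt
      exact h2 (hN i (by omega))
    · rintro ⟨h1, h2⟩
      exact ⟨h1.1, h2⟩
  rw [this]
  exact Finset.sum_le_sum_of_subset (Finset.Icc_subset_Icc_right (le_max_right _ _))

lemma part_le_psize {p : ℕ → ℕ} (hp : IsPartition p) {m : ℕ} (hm : 1 ≤ m) : p m ≤ psize p :=
  (Finset.single_le_sum (f := p) (fun _ _ => Nat.zero_le _)
    (Finset.mem_Icc.mpr ⟨hm, le_rfl⟩)).trans (sum_Icc_le_psize hp m)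

/-- The number of parts of a partition is at most its size. -/
lemma part_eq_zero {p : ℕ → ℕ} (hp : IsPartition p) {m : ℕ} (hm : psize p < m) : p m = 0 := by
  by_contra h0
  have hanti : ∀ a, 1 ≤ a → ∀ b, a ≤ b → p b ≤ p a := by
    intro a ha b hab
    induction b, hab using Nat.le_induction with
    | base => exact le_rfl
    | succ b hab ih => exact (hp.1 b (by omega)).trans ih
  have h1 : ∑ i ∈ Finset.Icc 1 m, 1 ≤ ∑ i ∈ Finset.Icc 1 m, p i := by
    apply Finset.sum_le_sum
    intro i hi
    rw [Finset.mem_Icc] at hi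
    have := hanti i hi.1 m hi.2
    omega
  have h2 := sum_Icc_le_psize hp m
  simp at h1
  omega

/-- Leading partial sums of a shifted sequence, short of the unshifted last entry. -/
lemma sum_shiftSeq {s m : ℕ} (k : ℤ) (x : ℕ → ℤ) (hm : 1 ≤ m) (hms : m ≤ s) :
    ∑ i ∈ Finset.Icc 1 m, shiftSeq s k x i = ∑ i ∈ Finset.Icc 1 m, x i + (m + 1) * k := by
  induction m, hm using Nat.le_induction with
  | base => simp [shiftSeq, show s ≠ 0 by omega]
  | succ m hm ih =>
    rw [Finset.sum_Icc_succ_top (by omega), Finset.sum_Icc_succ_top (by omega), ih (by omega)]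
    simp only [shiftSeq, show s ≠ 0 by omega, show m + 1 ≠ 1 by omega, hms, if_true, if_false]
    push_cast
    ring

lemma sum_shiftSeq_total {s : ℕ} (hs : 1 ≤ s) (k : ℤ) (x : ℕ → ℤ) :
    ∑ i ∈ Finset.Icc 1 s, shiftSeq (s - 1) k x i = ∑ i ∈ Finset.Icc 1 s, x i + s * k := by
  obtain ⟨t, rfl⟩ : ∃ t, s = t + 1 := ⟨s - 1, by omega⟩
  rw [Nat.add_sub_cancel]
  rcases Nat.eq_zero_or_pos t with rfl | ht
  · simp [shiftSeq]
  · rw [Finset.sum_Icc_succ_top (by omega), Finset.sum_Icc_succ_top (by omega),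
      sum_shiftSeq k x ht le_rfl]
    simp [shiftSeq, show t ≠ 0 by omega]
    ring

/-- If `k ≥ □^prop(η, η') + |π^1| + |π^s|`, then the shifted sequences
interlace, the partitions fit into the shifted rectangles, and the shifted `η'` majorizes
`(μ_1 + k, …, μ_s + k)`. -/
theorem stmt17 (s : ℕ) (hs : 1 ≤ s) (η η' : ℕ → ℤ) (μ : ℕ → ℤ) (P : ℕ → ℕ → ℕ)
    (hP : ∀ j, 1 ≤ j → j ≤ s → IsPartition (P j))
    (h1 : ∀ i, 1 ≤ i → i ≤ s → η (i + 1) ≤ η i)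
    (h2a : NearlyInterlaces s η η') (h2b : ApproxOverlay s η η' P)
    (h3 : MajZ (s + 1) η μ)
    (h4 : (∑ i ∈ Finset.Icc 1 (s + 1), η i) - ∑ i ∈ Finset.Icc 1 s, η' i = μ (s + 1))
    (k : ℤ) (hk : propTrap s η η' + (psize (P 1) : ℤ) + (psize (P s) : ℤ) ≤ k) :
    (∀ i, 1 ≤ i → i ≤ s →
        shiftSeq (s - 1) k η' i ≤ shiftSeq s k η i ∧
        shiftSeq s k η (i + 1) ≤ shiftSeq (s - 1) k η' i) ∧
    (∀ j, 1 ≤ j → j ≤ s →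
        FitsRect (P j) (shiftSeq s k η j - shiftSeq (s - 1) k η' j)
          (shiftSeq (s - 1) k η' j - shiftSeq s k η (j + 1))) ∧
    MajZ s (shiftSeq (s - 1) k η') (fun i => μ i + k) := by
  have hmaj : ∀ B : Finset ℕ, B ⊆ Finset.Icc 1 (s + 1) →
      ∑ i ∈ B, μ i ≤ ∑ i ∈ Finset.Icc 1 B.card, η i := by
    intro B hB
    obtain ⟨A, hA, hcard, hle⟩ := h3.1 B hB
    rw [← hcard]
    exact hle.trans (sum_le_sum_first (fun i hi hi' => h1 i hi (by omega)) hA)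
  have htot := h3.2
  have htopη := Finset.sum_Icc_succ_top (show 1 ≤ s + 1 by omega) η
  have htopμ := Finset.sum_Icc_succ_top (show 1 ≤ s + 1 by omega) μ
  have hμ_le : μ (s + 1) ≤ η 1 := by
    simpa using hmaj {s + 1} (by simp)
  have hμ_ge : η (s + 1) ≤ μ (s + 1) := by
    have := hmaj (Finset.Icc 1 s) (Finset.Icc_subset_Icc_right (by omega))
    rw [Nat.card_Icc, Nat.add_sub_cancel] at this
    linarith
  have hdsum : μ (s + 1) = ∑ i ∈ Finset.Icc 1 s, (η i - η' i) + η (s + 1) := by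
    rw [Finset.sum_sub_distrib]
    linarith
  have htele := sum_d_add_sum_e η η' (Nat.zero_le s)
  simp only [Nat.zero_add] at htele
  have hp1 := hP 1 le_rfl hs
  have hps := hP s hs le_rfl
  have hsum : ∑ i ∈ Finset.Icc 1 s, shiftSeq (s - 1) k η' i
      = ∑ i ∈ Finset.Icc 1 s, (μ i + k) := by
    rw [sum_shiftSeq_total hs, Finset.sum_add_distrib]
    simp
    linarith
  -- The empty set is trivial and the full set is the equality of the total sums.
  have hmajZ : (∀ B : Finset ℕ, B ⊆ Finset.Icc 1 s → 1 ≤ B.card → B.card < s →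
      ∑ i ∈ B, (μ i + k) ≤ ∑ i ∈ Finset.Icc 1 B.card, shiftSeq (s - 1) k η' i) →
      MajZ s (shiftSeq (s - 1) k η') (fun i => μ i + k) := by
    intro h
    refine ⟨fun B hB => ?_, hsum⟩
    have hBc : B.card ≤ s := by simpa using Finset.card_le_card hB
    rcases Nat.eq_zero_or_pos B.card with h0 | hpos
    · exact ⟨∅, by simp, by simp [h0], by simp [Finset.card_eq_zero.mp h0]⟩
    rcases hBc.eq_or_lt with heq | hlt
    · have hBeq : B = Finset.Icc 1 s := Finset.eq_of_subset_of_card_le hB (by simp [heq])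
      subst hBeq
      exact ⟨_, subset_rfl, rfl, hsum.ge⟩
    · exact ⟨Finset.Icc 1 B.card, Finset.Icc_subset_Icc_right hBc, by simp, h B hB hpos hlt⟩
  rcases hs.eq_or_lt with rfl | hs2
  · have hk0 : propTrap 1 η η' = 0 := by simp [propTrap]
    simp at htele hdsum hμ_le hμ_ge
    -- Here `η' 1 = μ 1`, which lies between `η 2` and `η 1`.
    have hd : η' 1 ≤ η 1 := by linarith
    have he : η 2 ≤ η' 1 := by linarith
    have hk1 : (psize (P 1) : ℤ) ≤ k := by linarith [Int.natCast_nonneg (psize (P 1))]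
    have hk2 : 0 ≤ k := le_trans (Int.natCast_nonneg _) hk1
    refine ⟨fun i hi hi' => ?_, fun j hj hj' => ?_, hmajZ fun B _ h h' => by omega⟩
    · obtain rfl : i = 1 := by omega
      simp [shiftSeq]
      constructor <;> linarith
    · obtain rfl : j = 1 := by omega
      simp only [shiftSeq]
      norm_num
      refine ⟨fun m hm => part_eq_zero hp1 (by omega), fun m hm => ?_⟩
      have := part_le_psize hp1 hm
      omega
  obtain ⟨-, hni⟩ := h2a
  obtain ⟨hd1, hes, hmid⟩ := hni hs2
  obtain ⟨hov1, hovs, hovm⟩ := h2b hs2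
  have hd : ∀ i, 1 ≤ i → i < s → 0 ≤ η i - η' i := by
    intro i hi his
    rcases hi.eq_or_lt with rfl | hi
    · linarith
    · linarith [(hmid i hi his).1]
  have he : ∀ j, 2 ≤ j → j ≤ s → 0 ≤ η' j - η (j + 1) := by
    intro j hj hjs
    rcases hjs.eq_or_lt with rfl | hjs
    · linarith
    · linarith [(hmid j hj hjs).2]
  have hX0 : ∀ m, m < s → 0 ≤ ∑ i ∈ Finset.Icc 1 m, (η i - η' i) := by
    intro m hm
    refine Finset.sum_nonneg fun i hi => ?_
    rw [Finset.mem_Icc] at hi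
    exact hd i hi.1 (by omega)
  have hY0 : ∀ m, 1 ≤ m → 0 ≤ ∑ j ∈ Finset.Icc (m + 1) s, (η' j - η (j + 1)) := by
    intro m hm
    refine Finset.sum_nonneg fun i hi => ?_
    rw [Finset.mem_Icc] at hi
    exact he i (by omega) hi.2
  have hblock := fun m (hm : m < s) => block_le_propTrap hm hd he
  have hT0 : 0 ≤ propTrap s η η' :=
    (mul_nonneg (hX0 1 hs2) (hY0 1 le_rfl)).trans (hblock 1 hs2)
  have hk1 : propTrap s η η' + (psize (P 1) : ℤ) ≤ k := by
    linarith [Int.natCast_nonneg (psize (P s))]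
  have hks : propTrap s η η' + (psize (P s) : ℤ) ≤ k := by
    linarith [Int.natCast_nonneg (psize (P 1))]
  have hkT : propTrap s η η' ≤ k := by
    linarith [Int.natCast_nonneg (psize (P 1))]
  -- If `e 1 < 0` then `1 ≤ d 1`, so the block with `m = 1` is at least `e 2 + ⋯ + e s ≥ -e 1`.
  have hTe1 : η 2 - η' 1 ≤ propTrap s η η' := by
    rcases le_or_gt (η 2 - η' 1) 0 with h | h
    · linarith
    · have hb := hblock 1 hs2
      have hsp := sum_Icc_split (fun j => η' j - η (j + 1)) hs
      have hη := h1 1 le_rfl hs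
      have hY := hY0 1 le_rfl
      simp only [Finset.Icc_self, Finset.sum_singleton, Nat.reduceAdd] at hb hsp hη hY
      have hd1' : 1 ≤ η 1 - η' 1 := by linarith
      nlinarith
  -- If `d s < 0` then `1 ≤ e s`, so the block with `m = s - 1` is at least `-d s`.
  have hTds : η' s - η s ≤ propTrap s η η' := by
    rcases le_or_gt (η' s - η s) 0 with h | h
    · linarith
    · have hb := hblock (s - 1) (by omega)
      have hX := hX0 (s - 1) (by omega)
      have hsp := sum_Icc_split (fun i => η i - η' i) (Nat.sub_le s 1)
      have hη := h1 s hs le_rfl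
      rw [Nat.sub_add_cancel hs] at hb hsp
      simp only [Finset.Icc_self, Finset.sum_singleton] at hb hsp
      have hes' : 1 ≤ η' s - η (s + 1) := by linarith
      nlinarith
  have hs0 : s ≠ 0 := by omega
  have hs10 : s - 1 ≠ 0 := by omega
  -- The values of the shifted side lengths, by the position of the index.
  have hval : ∀ i, 1 ≤ i → i ≤ s →
      (i = 1 → shiftSeq s k η i - shiftSeq (s - 1) k η' i = η 1 - η' 1 ∧
        shiftSeq (s - 1) k η' i - shiftSeq s k η (i + 1) = η' 1 - η 2 + k) ∧
      (2 ≤ i → i + 1 ≤ s → shiftSeq s k η i - shiftSeq (s - 1) k η' i = η i - η' i ∧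
        shiftSeq (s - 1) k η' i - shiftSeq s k η (i + 1) = η' i - η (i + 1)) ∧
      (i = s → shiftSeq s k η i - shiftSeq (s - 1) k η' i = η s - η' s + k ∧
        shiftSeq (s - 1) k η' i - shiftSeq s k η (i + 1) = η' s - η (s + 1)) := by
    intro i hi his
    refine ⟨?_, ?_, ?_⟩
    · rintro rfl
      simp only [shiftSeq, hs0, hs10, if_false, if_true, show 1 + 1 ≠ 1 by omega,
        show 1 + 1 ≤ s by omega]
      constructor <;> linarith
    · intro h h'
      simp only [shiftSeq, hs0, hs10, if_false, if_true, show i ≠ 1 by omega, show i + 1 ≠ 1 by omega,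
        show i ≤ s by omega, show i ≤ s - 1 by omega, h']
      constructor <;> linarith
    · rintro rfl
      simp only [shiftSeq, hs0, hs10, if_false, if_true, show i ≠ 1 by omega, show i + 1 ≠ 1 by omega,
        le_refl, show ¬ i ≤ i - 1 by omega, show ¬ i + 1 ≤ i by omega, and_true]
      ring
  have hcases : ∀ i, 1 ≤ i → i ≤ s → i = 1 ∨ (2 ≤ i ∧ i + 1 ≤ s) ∨ i = s := by
    intro i hi his
    omega
  refine ⟨fun i hi his => ?_, fun j hj hjs => ?_, hmajZ fun B hB hpos hlt => ?_⟩
  · obtain ⟨v1, v2, v3⟩ := hval i hi his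
    rcases hcases i hi his with h | ⟨h, h'⟩ | h
    · have := v1 h
      constructor <;> linarith
    · have := v2 h h'
      have := hmid i h h'
      constructor <;> linarith
    · have := v3 h
      constructor <;> linarith
  · obtain ⟨v1, v2, v3⟩ := hval j hj hjs
    rcases hcases j hj hjs with h | ⟨h, h'⟩ | h
    · rw [(v1 h).1, (v1 h).2]
      subst h
      refine ⟨hov1, fun m hm => ?_⟩
      have := part_le_psize hp1 hm
      omega
    · rw [(v2 h h').1, (v2 h h').2]
      exact hovm j h h'
    · rw [(v3 h).1, (v3 h).2]
      subst h
      exact ⟨fun m hm => part_eq_zero hps (by omega), hovs⟩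
  · rw [sum_shiftSeq k η' hpos (by omega), Finset.sum_add_distrib, Finset.sum_const, nsmul_eq_mul]
    have hX := hX0 B.card hlt
    have hY := hY0 B.card hpos
    have hb := hblock B.card hlt
    have hb1 := hmaj B (hB.trans (Finset.Icc_subset_Icc_right (by omega)))
    have hnot : s + 1 ∉ B := fun h => by
      have := Finset.mem_Icc.mp (hB h)
      omega
    have hb2 := hmaj (insert (s + 1) B) (Finset.insert_subset (by simp)
      (hB.trans (Finset.Icc_subset_Icc_right (by omega))))
    rw [Finset.sum_insert hnot, Finset.card_insert_of_notMem hnot,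
      Finset.sum_Icc_succ_top (by omega)] at hb2
    have hsp := sum_Icc_split (fun i => η i - η' i) hlt.le
    have htl := sum_d_add_sum_e η η' hlt.le
    have hXe : ∑ i ∈ Finset.Icc 1 B.card, (η i - η' i)
        = ∑ i ∈ Finset.Icc 1 B.card, η i - ∑ i ∈ Finset.Icc 1 B.card, η' i :=
      Finset.sum_sub_distrib _ _
    set X := ∑ i ∈ Finset.Icc 1 B.card, (η i - η' i)
    set Y := ∑ j ∈ Finset.Icc (B.card + 1) s, (η' j - η (j + 1))
    have hEX : ∑ i ∈ B, μ i - ∑ i ∈ Finset.Icc 1 B.card, η' i ≤ X := by linarith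
    have hEY : ∑ i ∈ B, μ i - ∑ i ∈ Finset.Icc 1 B.card, η' i ≤ Y := by linarith
    have hmin : ∑ i ∈ B, μ i - ∑ i ∈ Finset.Icc 1 B.card, η' i ≤ X * Y := by
      rcases hX.eq_or_lt with h | h
      · rw [← h] at hEX ⊢
        linarith
      · have : 1 ≤ X := h
        nlinarith
    linarith
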